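/- Let C be a real k×n matrix of rank k representing an oriented matroid M, and let T be a basis of M (a k-set of columns with nonzero determinant, say det(T) ≠ 0). Define the n×n matrix A by a_{ij} = det(T Δ {i,j})/det(T), where det(S) denotes the determinant of the columns of C indexed by S if |S| = k and 0 otherwise. Then A is skew-symmetric, and the map S ↦ sign Pf(A_{S Δ T}) agrees (up to global sign) with the map assigning to each k-set S the sign of the corresponding minor of C, extended by zero to sets of other cardinalities. -/

import Mathlib

/-- The Pfaffian of an `N × N` matrix (intended for skew-symmetric matrices):
`Pf(A) = ∑_{σ ∈ S'_N} sign(σ) ∏_{k=1}^{N/2} a_{σ(2k-1) σ(2k)}`, where `S'_N` is the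
set of permutations `σ` of `{0, …, N-1}` such that `σ(2k)` is minimal among
`σ(2k), σ(2k+1), …, σ(N-1)` for each `k`.  It is `0` for odd `N` and `1` for `N = 0`. -/
noncomputable def pfaffian {N : ℕ} (A : Matrix (Fin N) (Fin N) ℝ) : ℝ :=
  if h : 2 ∣ N then
    ∑ σ ∈ Finset.univ.filter
        (fun σ : Equiv.Perm (Fin N) =>
          ∀ p q : Fin N, 2 ∣ (p : ℕ) → p ≤ q → σ p ≤ σ q),
      ((Equiv.Perm.sign σ : ℤ) : ℝ) *
        ∏ k : Fin (N / 2),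
          A (σ ⟨2 * (k : ℕ), by have := k.2; omega⟩)
            (σ ⟨2 * (k : ℕ) + 1, by have := k.2; omega⟩)
  else 0

/-- The Pfaffian of the principal minor of `A` indexed by the subset `S`,
with rows and columns of the minor taken in increasing order of index. -/
noncomputable def pfMinor {n : ℕ} (A : Matrix (Fin n) (Fin n) ℝ) (S : Finset (Fin n)) : ℝ :=
  pfaffian (Matrix.of fun p q : Fin S.card =>
    A ((S.orderIsoOfFin rfl p : S) : Fin n) ((S.orderIsoOfFin rfl q : S) : Fin n))


/-- The `k × k` minor of a `k × n` matrix `C` on a set `S` of column indices, taken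
in increasing order: it is the determinant of the columns of `C` indexed by `S` if
`S` has cardinality `k`, and `0` otherwise. -/
noncomputable def colDet {k n : ℕ} (C : Matrix (Fin k) (Fin n) ℝ)
    (S : Finset (Fin n)) : ℝ :=
  if h : S.card = k then
    Matrix.det (Matrix.of fun i j : Fin k => C i ((S.orderIsoOfFin h j : S) : Fin n))
  else 0

/-! Write `det(S)` for `colDet C S`. The quotient `det(S) / det(T)` equals `Pf(A_{S Δ T})`
exactly, so that the global sign is the sign of `det(T)`; this is proved by induction on `X = S Δ
T`. Expanding the Pfaffian along its least index `a`, the induction hypothesis turns it into a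
signed sum of products `det(T Δ {a, b}) * det(S Δ {a, b})` over `b ∈ X \ {a}`. This sum is
evaluated by the Wick relation `∑ i ∈ U Δ V, ± det(U Δ {i}) * det(V Δ {i}) = 0` for `U = S Δ {a}`
and `V = T Δ {a}`, whose term at `i = a` is `det(S) * det(T)`. The Wick relation is in turn the
orthogonality of circuits and cocircuits: for `|U| = k + 1` the signed minors `det(U \ {i})` are
the coefficients of a linear dependence between the columns of `C`, and for `|V| = k - 1` the
signed minors `det(V ∪ {i})` form a vector in the row space of `C`.
-/

open Finset Matrix
open scoped symmDiff

section SymmDiff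

variable {α : Type*} [DecidableEq α]

theorem symmDiff_singleton_of_mem {s : Finset α} {a : α} (ha : a ∈ s) : s ∆ {a} = s.erase a := by
  ext x
  simp only [mem_symmDiff, mem_singleton, mem_erase]
  grind

theorem symmDiff_singleton_of_notMem {s : Finset α} {a : α} (ha : a ∉ s) :
    s ∆ {a} = insert a s := by
  ext x
  simp only [mem_symmDiff, mem_singleton, mem_insert]
  grind

theorem symmDiff_singleton_symmDiff_singleton (s : Finset α) {a b : α} (hab : a ≠ b) :
    s ∆ {a} ∆ {b} = s ∆ {a, b} := by
  rw [symmDiff_assoc, symmDiff_eq_union (disjoint_singleton.2 hab), ← insert_eq]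

theorem neg_one_pow_card_symmDiff {R : Type*} [Ring R] (s t : Finset α) :
    (-1 : R) ^ #(s ∆ t) = (-1) ^ #s * (-1) ^ #t := by
  have hcard : #s + #t = #(s ∆ t) + 2 * #(s ∩ t) := by
    have hst : #(s ∆ t) = #(s \ t) + #(t \ s) := card_union_of_disjoint disjoint_sdiff_sdiff
    have hs := card_sdiff_add_card_inter s t
    have ht := card_sdiff_add_card_inter t s
    rw [inter_comm] at ht
    omega
  rw [← pow_add, hcard, pow_add, pow_mul, neg_one_sq, one_pow, mul_one]

end SymmDiff

section OrderEmbOfFin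

variable {α : Type*} [LinearOrder α]

theorem orderEmbOfFin_erase {m : ℕ} {s : Finset α} (hs : #s = m + 1) (j : Fin (m + 1))
    (hj : #(s.erase (s.orderEmbOfFin hs j)) = m) :
    ⇑((s.erase (s.orderEmbOfFin hs j)).orderEmbOfFin hj) =
      s.orderEmbOfFin hs ∘ j.succAbove := by
  refine (orderEmbOfFin_unique hj (fun x => ?_) ?_).symm
  · simp [Fin.succAbove_ne]
  · exact (s.orderEmbOfFin hs).strictMono.comp (Fin.strictMono_succAbove j)

theorem exists_orderEmbOfFin_eq {m : ℕ} {s : Finset α} (hs : #s = m) {a : α} (ha : a ∈ s) :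
    ∃ j, s.orderEmbOfFin hs j = a := by
  rwa [← Set.mem_range, range_orderEmbOfFin, mem_coe]

theorem sum_eq_sum_orderEmbOfFin {M : Type*} [AddCommMonoid M] {m : ℕ} {s : Finset α}
    (hs : #s = m) (f : α → M) : ∑ i ∈ s, f i = ∑ j, f (s.orderEmbOfFin hs j) := by
  conv_lhs => rw [← map_orderEmbOfFin_univ s hs, sum_map]
  rfl

theorem card_filter_lt_orderEmbOfFin {m : ℕ} {s : Finset α} (hs : #s = m) (j : Fin m) :
    #{x ∈ s | x < s.orderEmbOfFin hs j} = j := by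
  rw [card_filter, sum_eq_sum_orderEmbOfFin hs]
  simp only [OrderEmbedding.lt_iff_lt]
  rw [← card_filter, filter_gt_eq_Iio, Fin.card_Iio]

theorem cons_orderEmbOfFin {m : ℕ} {s : Finset α} {a : α} (hs : #s = m) (ha : a ∉ s)
    (has : #(insert a s) = m + 1) {j : Fin (m + 1)} (hj : (insert a s).orderEmbOfFin has j = a) :
    (Fin.cons a (s.orderEmbOfFin hs) : Fin (m + 1) → α) =
      (insert a s).orderEmbOfFin has ∘ j.cycleRange.symm := by
  have herase : (insert a s).erase ((insert a s).orderEmbOfFin has j) = s := by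
    rw [hj, erase_insert ha]
  have hsj : ⇑(s.orderEmbOfFin hs) = (insert a s).orderEmbOfFin has ∘ j.succAbove := by
    rw [← orderEmbOfFin_erase has j (by rw [herase, hs])]
    congr! 2
    exact herase.symm
  rw [← Fin.cons_removeNth_eq_comp_cycleRange_symm, hj, hsj]
  rfl

end OrderEmbOfFin

section SignBelow

variable {α : Type*} [LinearOrder α] (R : Type*) [Ring R]

/-- The sign `(-1) ^ p` where `p` is the number of elements of `s` below `a`. If `a ∈ s`, then `p`
is the position of `a` in `s`, counted from `0`, so that this is the sign attached to `a` in a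
Laplace expansion along a line indexed by `s`. -/
def signBelow (s : Finset α) (a : α) : R := (-1) ^ #{x ∈ s | x < a}

theorem signBelow_mul_self (s : Finset α) (a : α) : signBelow R s a * signBelow R s a = 1 := by
  rw [signBelow, ← pow_add, Even.neg_one_pow ⟨_, rfl⟩]

theorem signBelow_orderEmbOfFin {m : ℕ} {s : Finset α} (hs : #s = m) (j : Fin m) :
    signBelow R s (s.orderEmbOfFin hs j) = (-1) ^ (j : ℕ) := by
  rw [signBelow, card_filter_lt_orderEmbOfFin]

theorem signBelow_symmDiff (s t : Finset α) (a : α) :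
    signBelow R (s ∆ t) a = signBelow R s a * signBelow R t a := by
  have hfilter : {x ∈ s ∆ t | x < a} = {x ∈ s | x < a} ∆ {x ∈ t | x < a} := by
    ext x
    simp only [mem_filter, mem_symmDiff]
    tauto
  rw [signBelow, hfilter, neg_one_pow_card_symmDiff, signBelow, signBelow]

theorem signBelow_insert_self (s : Finset α) (a : α) :
    signBelow R (insert a s) a = signBelow R s a := by
  rw [signBelow, filter_insert, if_neg (lt_irrefl a), signBelow]

theorem signBelow_of_isLeast {s : Finset α} {a : α} (ha : IsLeast (s : Set α) a) :
    signBelow R s a = 1 := by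
  rw [signBelow, filter_false_of_mem fun x hx => (ha.2 hx).not_gt, card_empty, pow_zero]

theorem signBelow_erase_of_lt {s : Finset α} {a b : α} (ha : a ∈ s) (hab : a < b) :
    signBelow R (s.erase a) b = -signBelow R s b := by
  rw [← symmDiff_singleton_of_mem ha, signBelow_symmDiff]
  simp [signBelow, filter_singleton, hab]

end SignBelow

section PfaffianExpansion

open Equiv

variable {M : ℕ}

/-- The permutation of `{0, …, M}` whose one-line notation is `j` followed by that of `τ`, the
values of `τ` being relabelled increasingly so as to avoid `j`. -/
def consPerm (j : Fin (M + 1)) (τ : Perm (Fin M)) : Perm (Fin (M + 1)) :=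
  j.cycleRange.symm * Perm.decomposeFin.symm (0, τ)

@[simp]
theorem consPerm_zero (j : Fin (M + 1)) (τ : Perm (Fin M)) : consPerm j τ 0 = j := by
  simp [consPerm]

@[simp]
theorem consPerm_succ (j : Fin (M + 1)) (τ : Perm (Fin M)) (q : Fin M) :
    consPerm j τ q.succ = j.succAbove (τ q) := by
  simp [consPerm]

theorem sign_consPerm (j : Fin (M + 1)) (τ : Perm (Fin M)) :
    Perm.sign (consPerm j τ) = (-1) ^ (j : ℕ) * Perm.sign τ := by
  simp [consPerm, Perm.sign_symm]

theorem consPerm_injective2 : Function.Injective2 (consPerm (M := M)) := by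
  intro j j' τ τ' h
  obtain rfl : j = j' := by simpa using DFunLike.congr_fun h 0
  refine ⟨rfl, Equiv.ext fun q => ?_⟩
  simpa using DFunLike.congr_fun h q.succ

theorem exists_consPerm_eq (σ : Perm (Fin (M + 1))) : ∃ j τ, consPerm j τ = σ := by
  have hbij : Function.Bijective (Function.uncurry (consPerm (M := M))) :=
    (Fintype.bijective_iff_injective_and_card _).2
      ⟨consPerm_injective2.uncurry, by simp [Fintype.card_perm, Nat.factorial_succ]⟩
  obtain ⟨⟨j, τ⟩, h⟩ := hbij.surjective σ
  exact ⟨j, τ, h⟩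

/-- The condition defining the index set `S'_N` of the sum `pfaffian`: every value of `σ` at an
even position, counted from `0`, is minimal among the values from that position on. -/
def IsPfaffianPerm {N : ℕ} (σ : Perm (Fin N)) : Prop :=
  ∀ p q : Fin N, 2 ∣ (p : ℕ) → p ≤ q → σ p ≤ σ q

theorem IsPfaffianPerm.apply_zero {σ : Perm (Fin (M + 1))} (hσ : IsPfaffianPerm σ) : σ 0 = 0 := by
  simpa using hσ 0 (σ.symm 0) (by simp) (Fin.zero_le _)

theorem isPfaffianPerm_consPerm_consPerm {j : Fin (M + 1)} {τ : Perm (Fin M)} :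
    IsPfaffianPerm (consPerm 0 (consPerm j τ)) ↔ IsPfaffianPerm τ := by
  constructor
  · intro h p q hp hpq
    simpa using h p.succ.succ q.succ.succ (by simpa [add_assoc] using hp) (by simpa using hpq)
  · intro h p q hp hpq
    cases p using Fin.cases with
    | zero => simp
    | succ p =>
    cases p using Fin.cases with
    | zero => simp at hp
    | succ p =>
    obtain ⟨q, rfl⟩ := Fin.exists_succ_eq.2 (Fin.ne_zero_of_lt (p.succ.succ_pos.trans_le hpq))
    rw [Fin.succ_le_succ_iff] at hpq
    obtain ⟨q, rfl⟩ := Fin.exists_succ_eq.2 (Fin.ne_zero_of_lt (p.succ_pos.trans_le hpq))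
    simpa using h p q (by simpa [add_assoc] using hp) (by simpa using hpq)

theorem IsPfaffianPerm.exists_consPerm_consPerm_eq {σ : Perm (Fin (M + 2))}
    (hσ : IsPfaffianPerm σ) :
    ∃ j τ, IsPfaffianPerm τ ∧ consPerm 0 (consPerm j τ) = σ := by
  obtain ⟨i, ρ, rfl⟩ := exists_consPerm_eq σ
  obtain rfl : i = 0 := by simpa using hσ.apply_zero
  obtain ⟨j, τ, rfl⟩ := exists_consPerm_eq ρ
  exact ⟨j, τ, isPfaffianPerm_consPerm_consPerm.1 hσ, rfl⟩

/-- The product of the entries of `A` at the pairs `(σ 0, σ 1), (σ 2, σ 3), …`, which is the term of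
`σ` in the Pfaffian of `A` up to sign. -/
def pairProd {R : Type*} [CommMonoid R] {N : ℕ} (A : Matrix (Fin N) (Fin N) R)
    (σ : Perm (Fin N)) : R :=
  ∏ k : Fin (N / 2),
    A (σ ⟨2 * (k : ℕ), by have := k.2; omega⟩) (σ ⟨2 * (k : ℕ) + 1, by have := k.2; omega⟩)

theorem pairProd_consPerm_consPerm {R : Type*} [CommMonoid R]
    (A : Matrix (Fin (M + 2)) (Fin (M + 2)) R) (j : Fin (M + 1)) (τ : Perm (Fin M)) :
    pairProd A (consPerm 0 (consPerm j τ)) =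
      A 0 j.succ * pairProd (A.submatrix (Fin.succ ∘ j.succAbove) (Fin.succ ∘ j.succAbove)) τ := by
  have hM : M / 2 + 1 = (M + 2) / 2 := by omega
  rw [pairProd, ← Equiv.prod_comp (finCongr hM), Fin.prod_univ_succ]
  congr 1
  · exact congr_arg₂ A (consPerm_zero _ _) ((consPerm_succ _ _ 0).trans (by simp))
  · refine prod_congr rfl fun i _ => ?_
    have hpair (r : ℕ) (hr : 2 * (i : ℕ) + r < M) (hr' : 2 * ((i : ℕ) + 1) + r < M + 2) :
        consPerm 0 (consPerm j τ) ⟨2 * ((i : ℕ) + 1) + r, hr'⟩ =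
          (j.succAbove (τ ⟨2 * (i : ℕ) + r, hr⟩)).succ := by
      have hsucc : (⟨2 * ((i : ℕ) + 1) + r, hr'⟩ : Fin (M + 2)) =
          Fin.succ (Fin.succ ⟨2 * (i : ℕ) + r, hr⟩) := by
        ext
        simp only [Fin.val_succ]
        ring
      rw [hsucc, consPerm_succ, consPerm_succ, Fin.succAbove_zero]
    exact congr_arg₂ A (hpair 0 _ _) (hpair 1 _ _)

theorem pfaffian_eq_sum {N : ℕ} (hN : 2 ∣ N) (A : Matrix (Fin N) (Fin N) ℝ)
    [DecidablePred (IsPfaffianPerm (N := N))] :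
    pfaffian A = ∑ σ with IsPfaffianPerm σ, ((Perm.sign σ : ℤ) : ℝ) * pairProd A σ := by
  rw [pfaffian, dif_pos hN]
  refine sum_congr (filter_congr_decidable _ _ _).symm fun σ _ => rfl

theorem pfaffian_of_not_two_dvd {N : ℕ} (hN : ¬2 ∣ N) (A : Matrix (Fin N) (Fin N) ℝ) :
    pfaffian A = 0 :=
  dif_neg hN

theorem pfaffian_fin_zero (A : Matrix (Fin 0) (Fin 0) ℝ) : pfaffian A = 1 := by
  simp [pfaffian]

theorem pfaffian_succ_row_zero (A : Matrix (Fin (M + 2)) (Fin (M + 2)) ℝ) :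
    pfaffian A = ∑ j : Fin (M + 1), (-1) ^ (j : ℕ) * A 0 j.succ *
      pfaffian (A.submatrix (Fin.succ ∘ j.succAbove) (Fin.succ ∘ j.succAbove)) := by
  classical
  by_cases hM : 2 ∣ M
  · simp only [pfaffian_eq_sum hM, pfaffian_eq_sum (hM.add (dvd_refl 2)), mul_sum]
    rw [sum_sigma']
    symm
    refine sum_bij (fun x _ => consPerm 0 (consPerm x.1 x.2)) ?_ ?_ ?_ ?_
    · rintro ⟨j, τ⟩ h
      simpa [isPfaffianPerm_consPerm_consPerm] using h
    · rintro ⟨j, τ⟩ - ⟨j', τ'⟩ - h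
      obtain ⟨rfl, rfl⟩ := consPerm_injective2 (consPerm_injective2 h).2
      rfl
    · intro σ hσ
      obtain ⟨j, τ, hτ, rfl⟩ := (mem_filter.1 hσ).2.exists_consPerm_consPerm_eq
      exact ⟨⟨j, τ⟩, by simpa using hτ, rfl⟩
    · rintro ⟨j, τ⟩ -
      rw [pairProd_consPerm_consPerm, sign_consPerm, sign_consPerm, Fin.val_zero, pow_zero, one_mul]
      push_cast
      ring
  · simp [pfaffian_of_not_two_dvd hM,
      pfaffian_of_not_two_dvd (mt (Nat.dvd_add_left (dvd_refl 2)).1 hM)]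

end PfaffianExpansion

section PfMinor

variable {n : ℕ} (A : Matrix (Fin n) (Fin n) ℝ)

theorem pfMinor_eq_pfaffian_submatrix {m : ℕ} {X : Finset (Fin n)} (hX : #X = m) :
    pfMinor A X = pfaffian (A.submatrix (X.orderEmbOfFin hX) (X.orderEmbOfFin hX)) := by
  subst hX
  rfl

theorem pfMinor_empty : pfMinor A ∅ = 1 := by
  rw [pfMinor_eq_pfaffian_submatrix A card_empty, pfaffian_fin_zero]

theorem pfMinor_singleton (a : Fin n) : pfMinor A {a} = 0 := by
  rw [pfMinor_eq_pfaffian_submatrix A (card_singleton a), pfaffian_of_not_two_dvd (by decide)]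

theorem pfMinor_eq_sum_erase {X : Finset (Fin n)} {a : Fin n} (ha : IsLeast (X : Set (Fin n)) a) :
    pfMinor A X = ∑ b ∈ X.erase a,
      signBelow ℝ (X.erase a) b * A a b * pfMinor A ((X.erase a).erase b) := by
  have hcard : #(X.erase a) + 1 = #X := card_erase_add_one ha.1
  rcases hm : #(X.erase a) with - | M
  · obtain rfl : X = {a} := by
      rw [← insert_erase ha.1, card_eq_zero.1 hm, insert_empty_eq]
    simp [pfMinor_singleton]
  have hX : #X = M + 2 := by omega
  obtain rfl : X.orderEmbOfFin hX 0 = a :=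
    (orderEmbOfFin_zero hX (Nat.succ_pos _)).trans ((X.isLeast_min' _).unique ha)
  rw [sum_eq_sum_orderEmbOfFin hm, pfMinor_eq_pfaffian_submatrix A hX, pfaffian_succ_row_zero]
  refine sum_congr rfl fun j _ => ?_
  have hj : #((X.erase (X.orderEmbOfFin hX 0)).erase
      ((X.erase (X.orderEmbOfFin hX 0)).orderEmbOfFin hm j)) = M := by
    rw [card_erase_of_mem (orderEmbOfFin_mem _ _ _), hm, Nat.add_sub_cancel]
  rw [signBelow_orderEmbOfFin, pfMinor_eq_pfaffian_submatrix A hj, orderEmbOfFin_erase hm,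
    orderEmbOfFin_erase hX]
  simp [Function.comp_assoc, Fin.succAbove_zero]

end PfMinor

section ColDet

variable {k n : ℕ} (C : Matrix (Fin k) (Fin n) ℝ)

theorem colDet_of_card_eq {S : Finset (Fin n)} (hS : #S = k) :
    colDet C S = (C.submatrix id (S.orderEmbOfFin hS)).det :=
  dif_pos hS

theorem colDet_of_card_ne {S : Finset (Fin n)} (hS : #S ≠ k) : colDet C S = 0 :=
  dif_neg hS

theorem sum_signBelow_mul_colDet_erase {U : Finset (Fin n)} (hU : #U = k + 1) (r : Fin k) :
    ∑ i ∈ U, signBelow ℝ U i * colDet C (U.erase i) * C r i = 0 := by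
  have hdet : (Matrix.of (vecCons (C r) C) |>.submatrix id (U.orderEmbOfFin hU)).det = 0 :=
    det_zero_of_row_eq (Fin.succ_ne_zero r).symm rfl
  rw [sum_eq_sum_orderEmbOfFin hU, ← hdet, det_succ_row_zero]
  refine sum_congr rfl fun j _ => ?_
  have hj : #(U.erase (U.orderEmbOfFin hU j)) = k := by
    rw [card_erase_of_mem (orderEmbOfFin_mem _ _ _), hU, Nat.add_sub_cancel]
  rw [signBelow_orderEmbOfFin, colDet_of_card_eq C hj, orderEmbOfFin_erase, mul_right_comm]
  rfl

theorem signBelow_mul_colDet_insert {m : ℕ} (C : Matrix (Fin (m + 1)) (Fin n) ℝ)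
    {V : Finset (Fin n)} (hV : #V = m) (i : Fin n) :
    signBelow ℝ V i * colDet C (insert i V) =
      (C.submatrix id (Fin.cons i (V.orderEmbOfFin hV) : Fin (m + 1) → Fin n)).det := by
  by_cases hi : i ∈ V
  · obtain ⟨q, hq⟩ := exists_orderEmbOfFin_eq hV hi
    rw [insert_eq_of_mem hi, colDet_of_card_ne C (by omega), mul_zero,
      det_zero_of_column_eq (Fin.succ_ne_zero q).symm fun r => by simp [hq]]
  · have hW : #(insert i V) = m + 1 := by rw [card_insert_of_notMem hi, hV]
    obtain ⟨j, hj⟩ := exists_orderEmbOfFin_eq hW (mem_insert_self i V)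
    have hsign : signBelow ℝ V i = (-1) ^ (j : ℕ) := by
      rw [← signBelow_insert_self, ← signBelow_orderEmbOfFin ℝ hW j, hj]
    have hdet := det_permute' j.cycleRange.symm (C.submatrix id ((insert i V).orderEmbOfFin hW))
    rw [submatrix_submatrix, Function.comp_id, ← cons_orderEmbOfFin hV hi hW hj] at hdet
    rw [hdet, Equiv.Perm.sign_symm, Fin.sign_cycleRange, hsign, colDet_of_card_eq C hW]
    simp

theorem exists_vecMul_eq_signBelow_mul_colDet_insert {V : Finset (Fin n)} (hV : #V + 1 = k) :
    ∃ y : Fin k → ℝ, ∀ i, signBelow ℝ V i * colDet C (insert i V) = (y ᵥ* C) i := by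
  subst hV
  refine ⟨fun r => (-1) ^ (r : ℕ) * (C.submatrix r.succAbove (V.orderEmbOfFin rfl)).det,
    fun i => ?_⟩
  rw [signBelow_mul_colDet_insert C rfl, det_succ_column_zero, vecMul, dotProduct]
  exact sum_congr rfl fun r _ => mul_right_comm _ _ _

theorem sum_signBelow_mul_colDet_erase_mul_colDet_insert {U V : Finset (Fin n)}
    (hU : #U = k + 1) (hV : #V + 1 = k) :
    ∑ i ∈ U, signBelow ℝ U i * colDet C (U.erase i) *
      (signBelow ℝ V i * colDet C (insert i V)) = 0 := by
  obtain ⟨y, hy⟩ := exists_vecMul_eq_signBelow_mul_colDet_insert C hV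
  calc
    _ = ∑ i ∈ U, ∑ r, y r * (signBelow ℝ U i * colDet C (U.erase i) * C r i) := by
      simp only [hy, vecMul, dotProduct, mul_sum, mul_left_comm (y _)]
    _ = ∑ r, y r * ∑ i ∈ U, signBelow ℝ U i * colDet C (U.erase i) * C r i := by
      rw [sum_comm]
      simp only [mul_sum]
    _ = 0 := by simp only [sum_signBelow_mul_colDet_erase C hU, mul_zero, sum_const_zero]

theorem sum_sdiff_signBelow_mul_colDet_erase_mul_colDet_insert (U V : Finset (Fin n)) :
    ∑ i ∈ U \ V, signBelow ℝ (U ∆ V) i * (colDet C (U.erase i) * colDet C (insert i V)) = 0 := by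
  by_cases hcard : #U = k + 1 ∧ #V + 1 = k
  · rw [← sum_signBelow_mul_colDet_erase_mul_colDet_insert C hcard.1 hcard.2,
      ← sum_subset (sdiff_subset : U \ V ⊆ U) fun i hiU hi => ?_]
    · refine sum_congr rfl fun i _ => ?_
      rw [signBelow_symmDiff, mul_mul_mul_comm]
    · have hiV : i ∈ V := by simpa [hiU] using hi
      rw [insert_eq_of_mem hiV, colDet_of_card_ne C (by omega : #V ≠ k), mul_zero, mul_zero]
  · refine sum_eq_zero fun i hi => ?_
    obtain ⟨hiU, hiV⟩ := mem_sdiff.1 hi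
    have hU := card_erase_add_one hiU
    have hV := card_insert_of_notMem hiV
    by_cases hUk : #(U.erase i) = k
    · rw [colDet_of_card_ne C (by omega : #(insert i V) ≠ k), mul_zero, mul_zero]
    · rw [colDet_of_card_ne C hUk, zero_mul, mul_zero]

theorem sum_symmDiff_signBelow_mul_colDet_mul_colDet (U V : Finset (Fin n)) :
    ∑ i ∈ U ∆ V, signBelow ℝ (U ∆ V) i * (colDet C (U ∆ {i}) * colDet C (V ∆ {i})) = 0 := by
  have hsdiff (U V : Finset (Fin n)) :
      ∑ i ∈ U \ V, signBelow ℝ (U ∆ V) i * (colDet C (U ∆ {i}) * colDet C (V ∆ {i})) = 0 := by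
    rw [← sum_sdiff_signBelow_mul_colDet_erase_mul_colDet_insert C U V]
    refine sum_congr rfl fun i hi => ?_
    obtain ⟨hiU, hiV⟩ := mem_sdiff.1 hi
    rw [symmDiff_singleton_of_mem hiU, symmDiff_singleton_of_notMem hiV]
  have hVU := hsdiff V U
  simp only [symmDiff_comm V U, mul_comm (colDet C (V ∆ _))] at hVU
  calc
    _ = ∑ i ∈ U \ V ∪ V \ U,
        signBelow ℝ (U ∆ V) i * (colDet C (U ∆ {i}) * colDet C (V ∆ {i})) := rfl
    _ = 0 := by rw [sum_union disjoint_sdiff_sdiff, hsdiff U V, hVU, add_zero]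

theorem sum_erase_signBelow_mul_colDet_pair (T : Finset (Fin n)) {X : Finset (Fin n)} {a : Fin n}
    (ha : IsLeast (X : Set (Fin n)) a) :
    ∑ b ∈ X.erase a, signBelow ℝ (X.erase a) b *
      (colDet C (T ∆ {a, b}) * colDet C (T ∆ ((X.erase a).erase b))) =
      colDet C T * colDet C (T ∆ X) := by
  have hwick := sum_symmDiff_signBelow_mul_colDet_mul_colDet C (T ∆ {a}) (T ∆ X ∆ {a})
  rw [symmDiff_symmDiff_symmDiff_comm, symmDiff_symmDiff_cancel_left, symmDiff_self, symmDiff_bot,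
    ← add_sum_erase X _ ha.1, symmDiff_symmDiff_cancel_right, symmDiff_symmDiff_cancel_right,
    signBelow_of_isLeast ℝ ha, one_mul] at hwick
  rw [eq_neg_of_add_eq_zero_left hwick, ← sum_neg_distrib]
  refine sum_congr rfl fun b hb => ?_
  have hab : a < b := lt_of_le_of_ne (ha.2 (mem_of_mem_erase hb)) (ne_of_mem_erase hb).symm
  rw [signBelow_erase_of_lt ℝ ha.1 hab, symmDiff_singleton_symmDiff_singleton T hab.ne,
    ← symmDiff_singleton_of_mem hb, ← symmDiff_singleton_of_mem ha.1, neg_mul]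
  simp only [symmDiff_assoc]

theorem pfMinor_eq_colDet_symmDiff_div {T : Finset (Fin n)} (hT : colDet C T ≠ 0)
    {A : Matrix (Fin n) (Fin n) ℝ}
    (hA : ∀ i j, i < j → A i j = colDet C (T ∆ {i, j}) / colDet C T) (X : Finset (Fin n)) :
    pfMinor A X = colDet C (T ∆ X) / colDet C T := by
  induction X using Finset.strongInduction with
  | H X ih =>
  rcases X.eq_empty_or_nonempty with rfl | hX
  · rw [pfMinor_empty, ← bot_eq_empty, symmDiff_bot, div_self hT]
  have ha := X.isLeast_min' hX
  set a := X.min' hX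
  calc
    pfMinor A X = ∑ b ∈ X.erase a, signBelow ℝ (X.erase a) b *
        (colDet C (T ∆ {a, b}) * colDet C (T ∆ ((X.erase a).erase b))) /
          (colDet C T * colDet C T) := by
      rw [pfMinor_eq_sum_erase A ha]
      refine sum_congr rfl fun b hb => ?_
      have hab : a < b := lt_of_le_of_ne (ha.2 (mem_of_mem_erase hb)) (ne_of_mem_erase hb).symm
      rw [ih _ ((erase_ssubset hb).trans (erase_ssubset ha.1)), hA a b hab]
      ring
    _ = colDet C (T ∆ X) / colDet C T := by
      rw [← sum_div, sum_erase_signBelow_mul_colDet_pair C T ha, mul_div_mul_left _ _ hT]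

end ColDet

theorem transpose_eq_neg_of_apply_eq_ite {ι R : Type*} [LinearOrder ι] [SubtractionMonoid R]
    {f : ι → ι → R} (hf : ∀ i j, f i j = f j i) {A : Matrix ι ι R}
    (hA : ∀ i j, A i j = if i = j then 0 else if i < j then f i j else -f i j) : Aᵀ = -A := by
  ext i j
  rw [transpose_apply, neg_apply, hA j i, hA i j, hf j i]
  rcases lt_trichotomy i j with h | rfl | h
  · simp [h, h.ne, h.ne', h.not_gt]
  · simp
  · simp [h, h.ne, h.ne', h.not_gt]

theorem sign_div {K : Type*} [Field K] [LinearOrder K] [IsStrictOrderedRing K] (x y : K) :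
    SignType.sign (x / y) = SignType.sign x * SignType.sign y := by
  have hinv : SignType.sign y⁻¹ = SignType.sign y := by
    rcases lt_trichotomy y 0 with h | rfl | h
    · rw [sign_neg h, sign_neg (inv_lt_zero.2 h)]
    · simp
    · rw [sign_pos h, sign_pos (inv_pos.2 h)]
  rw [div_eq_mul_inv, sign_mul, hinv]

/-- Let `C` be a real `k × n` matrix of rank `k` representing an oriented matroid,
and let `T` be a basis (a `k`-set of columns with `det(T) ≠ 0`).  Define the
`n × n` matrix `A` by `a_{ij} = det(T Δ {i,j})/det(T)`, where `det(S)` is the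
determinant of the columns of `C` indexed by `S` when `|S| = k` and `0` otherwise
(with the sign convention `a_{ji} = −a_{ij}`, `a_{ii} = 0`, the columns of each
`k`-set being taken in increasing order).  Then `A` is skew-symmetric, and the map
`S ↦ sign Pf(A_{S Δ T})` agrees up to a single global sign with the map assigning
to each `k`-set `S` the sign of the corresponding minor of `C` (extended by zero to
sets of other cardinalities). -/
theorem orientedMatroid_to_orientedDeltaMatroid_rep {k n : ℕ}
    (C : Matrix (Fin k) (Fin n) ℝ) (hC : C.rank = k)
    (T : Finset (Fin n)) (hT : colDet C T ≠ 0)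
    (A : Matrix (Fin n) (Fin n) ℝ)
    (hA : ∀ i j : Fin n, A i j =
      if i = j then 0
      else if i < j then colDet C (symmDiff T {i, j}) / colDet C T
      else -(colDet C (symmDiff T {i, j}) / colDet C T)) :
    A.transpose = -A ∧
    ∃ c : SignType, (c = 1 ∨ c = -1) ∧
      ∀ S : Finset (Fin n),
        SignType.sign (pfMinor A (symmDiff S T)) = c * SignType.sign (colDet C S) := by
  have hAlt (i j : Fin n) (hij : i < j) : A i j = colDet C (T ∆ {i, j}) / colDet C T := by
    rw [hA, if_neg hij.ne, if_pos hij]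
  refine ⟨transpose_eq_neg_of_apply_eq_ite (fun i j => by rw [pair_comm]) hA,
    SignType.sign (colDet C T), ?_, fun S => ?_⟩
  · rcases hT.lt_or_gt with h | h
    · exact .inr (sign_neg h)
    · exact .inl (sign_pos h)
  · rw [pfMinor_eq_colDet_symmDiff_div C hT hAlt, symmDiff_comm S T, symmDiff_symmDiff_cancel_left,
      sign_div, mul_comm]
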